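/- For 0 < β < 1, the LCHS kernel normalization satisfies C_β := ∫_ℝ 1/((1 − ik) e^{(1+ik)^β}) dk = 2π e^{−2^β}, where (1+ik)^β denotes the principal branch power. -/

import Mathlib

/-!
With `z = 1 + ik` the integrand is `g z / (2 - z)`, where `g z = exp (-z ^ β)` is holomorphic on
the right half-plane and decays there faster than any power of `|z|`, because
`Re (z ^ β) ≥ cos (βπ/2) |z| ^ β` and `cos (βπ/2) > 0`; only `g z = O(1 / |z|)` is needed.

For any such `g`, subtracting `2 g 2 / z` makes the singularity at `2` removable:
`F z = g z - 2 g 2 / z` vanishes at `2`, so `dslope F 2` is holomorphic on the right half-plane and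
equals `F z / (z - 2) = O(1 / |z| ^ 2)` away from `2`. Cauchy's theorem on the squares
`[1, 1 + 2T] × [-T, T]` shows that its integral along `Re z = 1` is zero, and the
subtracted term contributes `2 g 2 ∫ dk / (1 + k ^ 2) = 2π g 2`.
-/

open MeasureTheory

lemma norm_dslope_two_le {F : ℂ → ℂ} {K T : ℝ} (hT : 4 ≤ T) (hK : ∀ z : ℂ, 1 ≤ z.re → ‖F z‖ ≤ K / ‖z‖)
    (hF2 : F 2 = 0) (z : ℂ) (hz : 1 ≤ z.re) (hzT : T ≤ ‖z‖) :
    ‖dslope F 2 z‖ ≤ 2 * K / T ^ 2 := by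
  have hz2 : z ≠ 2 := by
    rintro rfl
    norm_num at hzT
    linarith
  have h0 : 0 < ‖z‖ := by linarith
  have hsub : ‖z‖ / 2 ≤ ‖z - 2‖ := by
    have := norm_sub_norm_le z 2
    norm_num at this
    linarith
  have hK0 : 0 ≤ K := by
    have h1 := (norm_nonneg _).trans (hK z hz)
    by_contra hneg
    have := div_neg_of_neg_of_pos (not_le.mp hneg) h0
    linarith
  rw [dslope_of_ne _ hz2, slope_def_field, hF2, sub_zero, norm_div]
  calc ‖F z‖ / ‖z - 2‖ ≤ (K / ‖z‖) / (‖z‖ / 2) := by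
        gcongr
        exact hK z hz
    _ = 2 * K / ‖z‖ ^ 2 := by field_simp
    _ ≤ 2 * K / T ^ 2 := by gcongr

/-- Cauchy's theorem on the square `[1, 1 + 2T] × [-T, T]`: the three sides other than the left one
have total length `6T`, and the integrand is at most `2K / T ^ 2` on them. -/
lemma square_bound {F : ℂ → ℂ} {K T : ℝ} (hT : 4 ≤ T)
    (hd : DifferentiableOn ℂ F {z | 0 < z.re})
    (hK : ∀ z : ℂ, 1 ≤ z.re → ‖F z‖ ≤ K / ‖z‖) (hF2 : F 2 = 0) :
    ‖∫ y in (-T)..T, dslope F 2 (1 + y * Complex.I)‖ ≤ 12 * K / T := by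
  have hopen : IsOpen {z : ℂ | 0 < z.re} := isOpen_lt continuous_const Complex.continuous_re
  have hds : DifferentiableOn ℂ (dslope F 2) {z | 0 < z.re} :=
    (Complex.differentiableOn_dslope (hopen.mem_nhds (by simp))).2 hd
  have hB := norm_dslope_two_le hT hK hF2
  have key := Complex.integral_boundary_rect_eq_zero_of_differentiableOn (dslope F 2)
    ⟨1, -T⟩ ⟨1 + 2 * T, T⟩ (hds.mono (by
      intro z hz
      have h := hz.1
      simp only [Set.mem_preimage] at h
      rw [Set.uIcc_of_le (by linarith)] at h
      exact lt_of_lt_of_le one_pos h.1))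
  simp only at key
  have hbot : ‖∫ x in (1 : ℝ)..(1 + 2 * T), dslope F 2 (x + ((-T : ℝ) : ℂ) * Complex.I)‖
      ≤ 2 * K / T ^ 2 * |1 + 2 * T - 1| := by
    apply intervalIntegral.norm_integral_le_of_norm_le_const
    intro x hx
    rw [Set.uIoc_of_le (by linarith)] at hx
    apply hB
    · simpa using hx.1.le
    · have := Complex.abs_im_le_norm ((x : ℂ) + ((-T : ℝ) : ℂ) * Complex.I)
      simp at this
      refine le_trans (le_abs_self T) (by simpa using this)
  have htop : ‖∫ x in (1 : ℝ)..(1 + 2 * T), dslope F 2 (x + (T : ℂ) * Complex.I)‖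
      ≤ 2 * K / T ^ 2 * |1 + 2 * T - 1| := by
    apply intervalIntegral.norm_integral_le_of_norm_le_const
    intro x hx
    rw [Set.uIoc_of_le (by linarith)] at hx
    apply hB
    · simpa using hx.1.le
    · have := Complex.abs_im_le_norm ((x : ℂ) + (T : ℂ) * Complex.I)
      simp at this
      exact le_trans (le_abs_self T) this
  have hright : ‖∫ y in (-T)..T, dslope F 2 (((1 + 2 * T : ℝ) : ℂ) + y * Complex.I)‖
      ≤ 2 * K / T ^ 2 * |T - -T| := by
    apply intervalIntegral.norm_integral_le_of_norm_le_const
    intro y hy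
    apply hB
    · simp; linarith
    · have := Complex.re_le_norm (((1 + 2 * T : ℝ) : ℂ) + y * Complex.I)
      simp at this
      have h2 : T ≤ 1 + 2 * T := by linarith
      refine h2.trans (by simpa using this)
  rw [sub_eq_zero] at key
  have key2 := congrArg norm key
  rw [norm_smul, Complex.norm_I, one_mul, Complex.ofReal_one] at key2
  rw [← key2]
  refine (norm_add_le _ _).trans ?_
  rw [norm_smul, Complex.norm_I, one_mul]
  have h3 := norm_sub_le (∫ x in (1 : ℝ)..(1 + 2 * T), dslope F 2 (x + ((-T : ℝ) : ℂ) * Complex.I))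
    (∫ x in (1 : ℝ)..(1 + 2 * T), dslope F 2 (x + (T : ℂ) * Complex.I))
  have e1 : |1 + 2 * T - 1| = 2 * T := by rw [abs_of_nonneg] <;> linarith
  have e2 : |T - -T| = 2 * T := by rw [abs_of_nonneg] <;> linarith
  rw [e1] at hbot htop
  rw [e2] at hright
  have e3 : 12 * K / T = 3 * (2 * K / T ^ 2 * (2 * T)) := by
    field_simp
    ring
  linarith

/-- The Cauchy integral formula on the line `Re z = 1` for the point `2`, for a function that is
`O(1 / |z|)` on the half-plane to the right of the line. -/
lemma integral_line_eq {g : ℂ → ℂ} {C : ℝ} (hd : DifferentiableOn ℂ g {z | 0 < z.re})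
    (hC : ∀ z : ℂ, 1 ≤ z.re → ‖g z‖ ≤ C / ‖z‖) :
    ∫ k : ℝ, (1 - Complex.I * (k : ℂ))⁻¹ * g (1 + Complex.I * (k : ℂ))
      = 2 * Real.pi * g 2 := by
  set F : ℂ → ℂ := fun z => g z - 2 * g 2 / z with hF
  set K : ℝ := C + 2 * ‖g 2‖ with hKdef
  have hF2 : F 2 = 0 := by simp [hF]
  have hFd : DifferentiableOn ℂ F {z | 0 < z.re} := by
    refine hd.sub ((differentiableOn_const _).div differentiableOn_id ?_)
    rintro z hz rfl
    simp at hz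
  have hFK : ∀ z : ℂ, 1 ≤ z.re → ‖F z‖ ≤ K / ‖z‖ := by
    intro z hz
    refine (norm_sub_le _ _).trans ?_
    rw [hKdef, add_div]
    gcongr
    · exact hC z hz
    · simp
  have hp : ∀ k : ℝ, 1 + Complex.I * (k : ℂ) ≠ 0 := by
    intro k h
    have := congrArg Complex.re h
    simp at this
  have hm : ∀ k : ℝ, 1 - Complex.I * (k : ℂ) ≠ 0 := by
    intro k h
    have := congrArg Complex.re h
    simp at this
  have hprod : ∀ k : ℝ, (1 - Complex.I * (k : ℂ)) * (1 + Complex.I * (k : ℂ))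
      = ((1 + k ^ 2 : ℝ) : ℂ) := by
    intro k
    push_cast
    linear_combination (-(k : ℂ) ^ 2) * Complex.I_sq
  have hcont : Continuous fun k : ℝ =>
      (1 - Complex.I * (k : ℂ))⁻¹ * g (1 + Complex.I * (k : ℂ)) := by
    refine Continuous.mul (Continuous.inv₀ (by fun_prop) hm) ?_
    exact hd.continuousOn.comp_continuous (by fun_prop) (by intro k; simp)
  have hInt : Integrable fun k : ℝ =>
      (1 - Complex.I * (k : ℂ))⁻¹ * g (1 + Complex.I * (k : ℂ)) := by
    refine (integrable_inv_one_add_sq.const_mul C).mono' hcont.aestronglyMeasurable ?_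
    refine Filter.Eventually.of_forall fun k => ?_
    have h1 := hC (1 + Complex.I * (k : ℂ)) (by simp)
    have h2 := congrArg norm (hprod k)
    rw [norm_mul, Complex.norm_real, Real.norm_of_nonneg (by positivity)] at h2
    rw [norm_mul, norm_inv, ← h2, mul_inv]
    calc _ ≤ ‖1 - Complex.I * (k : ℂ)‖⁻¹ * (C / ‖1 + Complex.I * (k : ℂ)‖) := by gcongr
      _ = _ := by ring
  have hInt2 : Integrable fun k : ℝ => 2 * g 2 * (((1 + k ^ 2)⁻¹ : ℝ) : ℂ) :=
    (integrable_inv_one_add_sq.ofReal (𝕜 := ℂ)).const_mul _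
  have hrel : ∀ k : ℝ, dslope F 2 (1 + k * Complex.I) =
      2 * g 2 * (((1 + k ^ 2)⁻¹ : ℝ) : ℂ)
        - (1 - Complex.I * (k : ℂ))⁻¹ * g (1 + Complex.I * (k : ℂ)) := by
    intro k
    have hne : (1 + k * Complex.I : ℂ) ≠ 2 := by
      intro h
      have := congrArg Complex.re h
      simp at this
    rw [dslope_of_ne _ hne, slope_def_field, hF2, sub_zero, Complex.ofReal_inv, ← hprod,
      mul_comm (k : ℂ) Complex.I]
    have e : (1 + Complex.I * (k : ℂ) - 2) = -(1 - Complex.I * (k : ℂ)) := by ring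
    rw [e, hF]
    have := hp k
    have := hm k
    field_simp
    ring
  have hlim := intervalIntegral_tendsto_integral (hInt2.sub hInt)
    Filter.tendsto_neg_atTop_atBot Filter.tendsto_id
  have hzero : Filter.Tendsto (fun T : ℝ => ∫ y in (-T)..T, dslope F 2 (1 + y * Complex.I))
      Filter.atTop (nhds 0) := by
    refine squeeze_zero_norm' (a := fun T : ℝ => 12 * K / T) ?_
      (Filter.tendsto_id.const_div_atTop _)
    filter_upwards [Filter.eventually_ge_atTop 4] with T hT
    exact square_bound hT hFd hFK hF2
  simp only [hrel] at hzero
  have h0 := tendsto_nhds_unique hlim hzero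
  simp only [Pi.sub_apply] at h0
  rw [integral_sub hInt2 hInt, sub_eq_zero, integral_const_mul, integral_complex_ofReal,
    integral_univ_inv_one_add_sq] at h0
  rw [← h0]
  ring

/-- `exp (-z ^ β)` is `O(1 / |z|)` on the right half-plane, since there
`Re (z ^ β) = |z| ^ β cos (β arg z) ≥ |z| ^ β cos (βπ/2)`. -/
lemma exists_decay (β : ℝ) (hβ0 : 0 < β) (hβ1 : β < 1) :
    ∃ C : ℝ, ∀ z : ℂ, 1 ≤ z.re → ‖Complex.exp (-(z ^ (β : ℂ)))‖ ≤ C / ‖z‖ := by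
  set c := Real.cos (β * (Real.pi / 2)) with hc
  have hpi := Real.pi_pos
  have hc0 : 0 < c := Real.cos_pos_of_mem_Ioo ⟨by nlinarith, by nlinarith⟩
  have hre : ∀ z : ℂ, 1 ≤ z.re → ‖Complex.exp (-(z ^ (β : ℂ)))‖ ≤ Real.exp (-c * ‖z‖ ^ β) := by
    intro z hz
    have hz0 : z ≠ 0 := by
      rintro rfl
      norm_num at hz
    have harg := Complex.abs_arg_le_pi_div_two_iff.2 (zero_le_one.trans hz)
    rw [Complex.norm_exp, Complex.neg_re, Complex.cpow_ofReal_re, neg_mul, mul_comm c]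
    gcongr
    rw [hc, ← Real.cos_abs (z.arg * β), abs_mul, abs_of_pos hβ0, mul_comm]
    apply Real.cos_le_cos_of_nonneg_of_le_pi
    · positivity
    · nlinarith
    · gcongr
  have hlim := (tendsto_rpow_mul_exp_neg_mul_atTop_nhds_zero (1 / β) c hc0).comp
    (tendsto_rpow_atTop hβ0)
  obtain ⟨R, hR⟩ := Filter.eventually_atTop.1 (hlim.eventually_le_const one_pos)
  refine ⟨max 1 R, fun z hz => (hre z hz).trans ?_⟩
  have hz1 : 0 < ‖z‖ := by linarith [Complex.re_le_norm z]
  rw [le_div_iff₀ hz1]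
  rcases le_total R ‖z‖ with h | h
  · have h1 := hR _ h
    simp only [Function.comp] at h1
    rw [← Real.rpow_mul hz1.le, mul_one_div_cancel hβ0.ne', Real.rpow_one, mul_comm] at h1
    exact h1.trans (le_max_left _ _)
  · have h1 : Real.exp (-c * ‖z‖ ^ β) ≤ 1 := by
      rw [Real.exp_le_one_iff, neg_mul, neg_nonpos]
      positivity
    calc _ ≤ 1 * ‖z‖ := by gcongr
      _ ≤ _ := by rw [one_mul]; exact h.trans (le_max_right _ _)

/-- The LCHS kernel normalization: for `0 < β < 1`,
`C_β = ∫_ℝ dk / ((1 − ik) e^{(1+ik)^β}) = 2π e^{−2^β}` (principal branch powers). -/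
theorem stmt_15 (β : ℝ) (hβ0 : 0 < β) (hβ1 : β < 1) :
    ∫ k : ℝ, (1 - Complex.I * (k : ℂ))⁻¹ * Complex.exp (-((1 + Complex.I * (k : ℂ)) ^ (β : ℂ)))
      = ((2 * Real.pi * Real.exp (-((2 : ℝ) ^ β)) : ℝ) : ℂ) := by
  obtain ⟨C, hC⟩ := exists_decay β hβ0 hβ1
  have hd : DifferentiableOn ℂ (fun z : ℂ => Complex.exp (-(z ^ (β : ℂ)))) {z | 0 < z.re} := by
    intro z hz
    exact (DifferentiableAt.cpow_const differentiableAt_id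
      (Or.inl hz)).neg.cexp.differentiableWithinAt
  rw [integral_line_eq hd hC]
  push_cast
  rw [Complex.ofReal_cpow (by norm_num)]
  push_cast
  rfl
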